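/- arXiv:2108.05474 — 3 statements merged into one kernel-verified Lean document; each statement's English description precedes it below -/
import Mathlib

section
/- Let (r_k) be a sequence of positive integers with r_k > k for all k and r_k/k → 1 as k → ∞. Then f(k; r_k)/k² → 1/2 as k → ∞; that is, f(k; r_k) = (1/2 ± o(1))k². -/
/-- A word `σ ∈ [r]^n` contains a permutation `τ ∈ S_k` as a pattern. -/
def ContainsPattern {n r k : ℕ} (σ : Fin n → Fin r) (τ : Equiv.Perm (Fin k)) : Prop :=
  ∃ i : Fin k → Fin n, StrictMono i ∧ ∀ j j' : Fin k, σ (i j) < σ (i j') ↔ τ j < τ j'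

/-- A word `σ ∈ [r]^n` is a `k`-superpattern. -/
def IsSuperpattern {n r : ℕ} (k : ℕ) (σ : Fin n → Fin r) : Prop :=
  ∀ τ : Equiv.Perm (Fin k), ContainsPattern σ τ

/-- `f(k; r)`: the minimum `n` such that some `σ ∈ [r]^n` is a `k`-superpattern. -/
noncomputable def minSuperpatternLength (k r : ℕ) : ℕ :=
  sInf {n : ℕ | ∃ σ : Fin n → Fin r, IsSuperpattern k σ}


/-! ### Upper bound: the zigzag word -/

def zigWord (k i : ℕ) : ℕ :=
  if (i / (k/2+1)) % 2 = 0 then min k (2 * (i % (k/2+1)))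
  else min k (2 * (k/2 - i % (k/2+1)) + 1)

def zigPos (k ρ v : ℕ) : ℕ := ρ * (k/2+1) + (if v % 2 = 0 then v/2 else k/2 - v/2)

lemma zigWord_zigPos (k ρ v : ℕ) (hv : v ≤ k) (h : ρ % 2 = v % 2) :
    zigWord k (zigPos k ρ v) = v := by
  have hoff : (if v % 2 = 0 then v/2 else k/2 - v/2) < k/2+1 := by split_ifs <;> omega
  have h1 : zigPos k ρ v / (k/2+1) = ρ := by
    unfold zigPos
    rw [mul_comm, Nat.mul_add_div (by omega), Nat.div_eq_of_lt hoff, add_zero]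
  have h2 : zigPos k ρ v % (k/2+1) = (if v % 2 = 0 then v/2 else k/2 - v/2) := by
    unfold zigPos
    rw [mul_comm, Nat.mul_add_mod, Nat.mod_eq_of_lt hoff]
  unfold zigWord
  rw [h1, h2]
  split_ifs <;> omega

def zigCost (a b : ℕ) : ℕ :=
  if a % 2 = b % 2 then
    (if a % 2 = 0 then (if a < b then 0 else 2) else (if b < a then 0 else 2)) else 1

def zigRun (v : ℕ → ℕ) : ℕ → ℕ
  | 0 => v 0 % 2
  | i+1 => zigRun v i + zigCost (v i) (v (i+1))

lemma zigRun_mod (v : ℕ → ℕ) (i : ℕ) : zigRun v i % 2 = v i % 2 := by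
  induction i with
  | zero => simp [zigRun]
  | succ i ih => simp only [zigRun, zigCost]; split_ifs <;> omega

lemma zigRun_sum (k : ℕ) (v : ℕ → ℕ) (hv : ∀ i, i + 1 < k → v i ≠ v (i+1)) (i : ℕ) (hi : i < k) :
    zigRun v i + zigRun (fun j => v j + 1) i = 2 * i + 1 := by
  induction i with
  | zero => simp only [zigRun]; omega
  | succ i ih =>
    have := ih (by omega)
    have := hv i hi
    simp only [zigRun, zigCost]
    split_ifs <;> omega

lemma zigRun_mono (v : ℕ → ℕ) : Monotone (zigRun v) :=
  monotone_nat_of_le_succ fun i => by simp [zigRun]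

lemma zigPos_lt (k : ℕ) (v : ℕ → ℕ) (i : ℕ) (h1 : v i ≤ k)
    (h2 : v (i+1) ≤ k) :
    zigPos k (zigRun v i) (v i) < zigPos k (zigRun v (i+1)) (v (i+1)) := by
  simp only [zigRun, zigPos, zigCost, add_mul]
  split_ifs <;> omega

lemma zig_embed (k n : ℕ) (hn : n = k * (k/2+1)) (v : ℕ → ℕ) (hv : ∀ i, i + 1 < k → v i ≠ v (i+1))
    (hle : ∀ i < k, v i ≤ k) (hrun : ∀ i < k, zigRun v i ≤ k - 1) :
    ∃ p : Fin k → Fin n, StrictMono p ∧ ∀ i, zigWord k (p i) = v i := by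
  have hlt : ∀ i < k, zigPos k (zigRun v i) (v i) < n := by
    intro i hi
    have h1 := hle i hi
    have h2 := hrun i hi
    have h3 : zigRun v i * (k/2+1) ≤ (k-1) * (k/2+1) := Nat.mul_le_mul_right _ h2
    have h4 : (k - 1) * (k/2+1) + (k/2+1) = k * (k/2+1) := by
      obtain ⟨j, rfl⟩ : ∃ j, k = j + 1 := ⟨k-1, by omega⟩
      simp; ring
    unfold zigPos
    split_ifs <;> omega
  refine ⟨fun i => ⟨_, hlt i i.2⟩, ?_, ?_⟩
  · intro i j hij
    have key : ∀ b a : ℕ, a < b → b < k →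
        zigPos k (zigRun v a) (v a) < zigPos k (zigRun v b) (v b) := by
      intro b
      induction b with
      | zero => intro a ha; omega
      | succ b ih =>
        intro a ha hb
        have hs := zigPos_lt k v b (hle b (by omega)) (hle (b+1) hb)
        rcases Nat.lt_succ_iff_lt_or_eq.mp ha with h | h
        · exact (ih a h (by omega)).trans hs
        · rw [h]; exact hs
    exact key j i hij j.2
  · intro i
    exact zigWord_zigPos k _ _ (hle i i.2) (zigRun_mod v i)

lemma zig_super (k r : ℕ) (h : k < r) :
    ∃ σ : Fin (k * (k/2+1)) → Fin r, IsSuperpattern k σ := by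
  have hz : ∀ i, zigWord k i < r := by
    intro i; unfold zigWord; split_ifs <;> omega
  refine ⟨fun i => ⟨zigWord k i, hz i⟩, ?_⟩
  intro τ
  let v : ℕ → ℕ := fun i => if h : i < k then (τ ⟨i, h⟩ : ℕ) else 0
  have hvv : ∀ i : Fin k, v i = τ i := by intro i; simp [v]
  have hvlt : ∀ i < k, v i < k := by
    intro i hi; simp only [v, hi, dite_true]; exact (τ _).2
  have hne : ∀ i, i + 1 < k → v i ≠ v (i+1) := by
    intro i hi he
    have hi' : i < k := by omega
    simp only [v, hi, hi', dite_true] at he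
    have := τ.injective (Fin.ext he)
    simp at this
  have hsum := zigRun_sum k v hne
  suffices ∃ s : ℕ, ∃ p : Fin k → Fin (k * (k/2+1)), StrictMono p ∧
      ∀ i, zigWord k (p i) = v i + s by
    obtain ⟨s, p, hp, hps⟩ := this
    refine ⟨p, hp, fun j j' => ?_⟩
    rw [Fin.mk_lt_mk, hps, hps, hvv, hvv, Fin.lt_def]
    omega
  by_cases hc : zigRun v (k-1) ≤ k - 1
  · refine ⟨0, zig_embed k _ rfl v hne (fun i hi => (hvlt i hi).le) ?_⟩
    intro i hi
    exact (zigRun_mono v (by omega : i ≤ k-1)).trans hc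
  · refine ⟨1, zig_embed k _ rfl (fun i => v i + 1) ?_ (fun i hi => hvlt i hi) ?_⟩
    · intro i hi; have := hne i hi; simpa using this
    · intro i hi
      have := zigRun_mono (fun i => v i + 1) (by omega : i ≤ k-1)
      have := hsum (k-1) (by omega)
      omega

lemma minSuperpatternLength_le (k r : ℕ) (h : k < r) :
    minSuperpatternLength k r ≤ k * (k/2+1) := Nat.sInf_le (zig_super k r h)

lemma minSuperpatternLength_spec (k r : ℕ) (h : k < r) :
    ∃ σ : Fin (minSuperpatternLength k r) → Fin r, IsSuperpattern k σ :=
  Nat.sInf_mem (s := {n : ℕ | ∃ σ : Fin n → Fin r, IsSuperpattern k σ}) ⟨_, zig_super k r h⟩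

/-! ### Lower bound: counting -/

lemma sum_le_sum_range_of_card (f : ℕ → ℝ) (hf : Antitone f) (h0 : ∀ i, 0 ≤ f i) (r : ℕ)
    (T : Finset ℕ) (hT : T.card ≤ r) : ∑ d ∈ T, f d ≤ ∑ d ∈ Finset.range r, f d := by
  have h1 : ∑ d ∈ T, f d = ∑ i : Fin T.card, f (T.orderEmbOfFin rfl i) := by
    conv_lhs => rw [← Finset.image_orderEmbOfFin_univ T rfl]
    rw [Finset.sum_image]
    intro a _ b _ hab
    exact (T.orderEmbOfFin rfl).injective hab
  rw [h1]
  have h2 : ∀ (i : Fin T.card), (i : ℕ) ≤ T.orderEmbOfFin rfl i := by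
    rintro ⟨i, hi⟩
    induction i with
    | zero => simp
    | succ i ih =>
      have h3 := ih (by omega)
      have h4 : T.orderEmbOfFin rfl ⟨i, by omega⟩ < T.orderEmbOfFin rfl ⟨i+1, hi⟩ :=
        (T.orderEmbOfFin rfl).strictMono (by simp)
      simp only at h3 ⊢
      omega
  calc ∑ i : Fin T.card, f (T.orderEmbOfFin rfl i) ≤ ∑ i : Fin T.card, f i :=
        Finset.sum_le_sum fun i _ => hf (h2 i)
    _ = ∑ d ∈ Finset.range T.card, f d := Fin.sum_univ_eq_sum_range f _
    _ ≤ _ := Finset.sum_le_sum_of_subset_of_nonneg (Finset.range_mono hT) fun i _ _ => h0 i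

def EmbIn {n r : ℕ} (σ : Fin n → Fin r) (a b m : ℕ) (u : Fin m → Fin r) : Prop :=
  ∃ p : Fin m → Fin n, StrictMono p ∧ (∀ i, a ≤ (p i : ℕ) ∧ (p i : ℕ) < b) ∧ ∀ i, σ (p i) = u i

open Classical in
lemma embIn_count {n r : ℕ} (σ : Fin n → Fin r) (z : ℝ) (hz0 : 0 < z) (hz1 : z ≤ 1) (b : ℕ) :
    ∀ (m a : ℕ), a ≤ b →
    ((Finset.univ.filter (fun u : Fin m → Fin r => EmbIn σ a b m u)).card : ℝ) * z ^ b
      ≤ z ^ a * (∑ d ∈ Finset.range r, z ^ (d+1)) ^ m := by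
  intro m
  induction m with
  | zero =>
    intro a hab
    have h1 : ((Finset.univ.filter (fun u : Fin 0 → Fin r => EmbIn σ a b 0 u)).card : ℝ) ≤ 1 := by
      exact_mod_cast (Finset.card_le_univ _).trans (by simp)
    have h2 : z ^ b ≤ z ^ a := pow_le_pow_of_le_one hz0.le hz1 hab
    have h3 : 0 ≤ z ^ b := by positivity
    simp only [pow_zero, mul_one]
    nlinarith
  | succ m ih =>
    intro a hab
    set G := ∑ d ∈ Finset.range r, z ^ (d+1) with hG
    have hG0 : 0 ≤ G := Finset.sum_nonneg fun i _ => by positivity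
    let Q : Fin r → ℕ → Prop := fun x p => a ≤ p ∧ p < b ∧ ∃ h : p < n, σ ⟨p, h⟩ = x
    let X : Finset (Fin r) := Finset.univ.filter (fun x => ∃ p, Q x p)
    let d : Fin r → ℕ := fun x => sInf {p | Q x p}
    have hd : ∀ x ∈ X, Q x (d x) := by
      intro x hx
      have hx' : ∃ p, Q x p := by simpa [X] using hx
      exact Nat.sInf_mem (s := {p | Q x p}) hx'
    have hsub : Finset.univ.filter (fun u : Fin (m+1) → Fin r => EmbIn σ a b (m+1) u) ⊆
        X.biUnion (fun x => (Finset.univ.filter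
          (fun u : Fin m → Fin r => EmbIn σ (d x + 1) b m u)).image
            (fun u => (Fin.cons x u : Fin (m+1) → Fin r))) := by
      intro u hu
      obtain ⟨p, hp, hpab, hpu⟩ := (Finset.mem_filter.mp hu).2
      have hQ : Q (u 0) (p 0) := ⟨(hpab 0).1, (hpab 0).2, (p 0).2, hpu 0⟩
      rw [Finset.mem_biUnion]
      refine ⟨u 0, by simp only [X, Finset.mem_filter, Finset.mem_univ, true_and]; exact ⟨_, hQ⟩, ?_⟩
      rw [Finset.mem_image]
      refine ⟨Fin.tail u, ?_, Fin.cons_self_tail u⟩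
      simp only [Finset.mem_filter, Finset.mem_univ, true_and]
      refine ⟨fun i => p i.succ, fun i j hij => hp (Fin.succ_lt_succ_iff.mpr hij), ?_, ?_⟩
      · intro i
        refine ⟨?_, (hpab _).2⟩
        have h1 : d (u 0) ≤ p 0 := Nat.sInf_le hQ
        have h2 : p 0 < p i.succ := hp (Fin.succ_pos i)
        have h3 : (p 0 : ℕ) < p i.succ := h2
        change d (u 0) + 1 ≤ (p i.succ : ℕ)
        omega
      · intro i; exact hpu i.succ
    have hcard : ((Finset.univ.filter
        (fun u : Fin (m+1) → Fin r => EmbIn σ a b (m+1) u)).card : ℝ) ≤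
        ∑ x ∈ X, ((Finset.univ.filter
          (fun u : Fin m → Fin r => EmbIn σ (d x + 1) b m u)).card : ℝ) := by
      have := (Finset.card_le_card hsub).trans (Finset.card_biUnion_le.trans
        (Finset.sum_le_sum fun x _ => Finset.card_image_le))
      exact_mod_cast this
    have hinj : Set.InjOn (fun x => d x - a) X := by
      intro x hx y hy hxy
      obtain ⟨h1, _, h2, h3⟩ := hd x hx
      obtain ⟨h4, _, h5, h6⟩ := hd y hy
      have : d x = d y := by simp only at hxy; omega
      rw [← h3, ← h6]
      congr 2
    have hsum : ∑ x ∈ X, z ^ (d x + 1) ≤ z ^ a * G := by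
      have h1 : ∑ x ∈ X, z ^ (d x + 1) = z ^ a * ∑ x ∈ X, z ^ ((d x - a) + 1) := by
        rw [Finset.mul_sum]
        refine Finset.sum_congr rfl fun x hx => ?_
        have := (hd x hx).1
        rw [← pow_add]; congr 1; omega
      rw [h1]
      refine mul_le_mul_of_nonneg_left ?_ (by positivity)
      rw [← Finset.sum_image (f := fun e => z ^ (e + 1)) hinj]
      refine sum_le_sum_range_of_card _ ?_ (fun i => by positivity) r _ ?_
      · intro i j hij; exact pow_le_pow_of_le_one hz0.le hz1 (by omega)
      · refine Finset.card_image_le.trans ((Finset.card_le_univ X).trans (by simp))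
    calc _ ≤ (∑ x ∈ X, ((Finset.univ.filter
          (fun u : Fin m → Fin r => EmbIn σ (d x + 1) b m u)).card : ℝ)) * z ^ b :=
          mul_le_mul_of_nonneg_right hcard (by positivity)
      _ = ∑ x ∈ X, ((Finset.univ.filter
          (fun u : Fin m → Fin r => EmbIn σ (d x + 1) b m u)).card : ℝ) * z ^ b := by
          rw [Finset.sum_mul]
      _ ≤ ∑ x ∈ X, z ^ (d x + 1) * G ^ m :=
          Finset.sum_le_sum fun x hx => ih (d x + 1) (hd x hx).2.1
      _ = (∑ x ∈ X, z ^ (d x + 1)) * G ^ m := by rw [Finset.sum_mul]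
      _ ≤ z ^ a * G * G ^ m := mul_le_mul_of_nonneg_right hsum (by positivity)
      _ = z ^ a * G ^ (m+1) := by ring

/-- Number of embeddings `Fin k ↪ Fin r` whose restriction along `c` lies in `E`. -/
lemma card_extend {m k r : ℕ} (c : Fin m ↪ Fin k) (E : Finset (Fin m → Fin r)) :
    Nat.card {u : Fin k ↪ Fin r // (fun t => u (c t)) ∈ E} ≤
      E.card * (r - m).descFactorial (k - m) := by
  classical
  let S := Σ g : {g : Fin m ↪ Fin r // (g : Fin m → Fin r) ∈ E},
    ({x : Fin k // x ∉ Set.range c} ↪ {y : Fin r // y ∉ Set.range g.1})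
  let F : {u : Fin k ↪ Fin r // (fun t => u (c t)) ∈ E} → S := fun u =>
    ⟨⟨c.trans u.1, u.2⟩, ⟨fun x => ⟨u.1 x.1, by
      rintro ⟨t, ht⟩
      exact x.2 ⟨t, u.1.injective ht⟩⟩, fun x y hxy => by
        simp only [Subtype.mk.injEq] at hxy
        exact Subtype.ext (u.1.injective hxy)⟩⟩
  have hF : Function.Injective F := by
    intro u w huw
    have h1 : ∀ t, u.1 (c t) = w.1 (c t) := fun t =>
      congrArg (fun s : S => s.1.1 t) huw
    have h2 : ∀ x (hx : x ∉ Set.range c), u.1 x = w.1 x := fun x hx =>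
      congrArg (fun s : S => ((s.2 ⟨x, hx⟩).1 : Fin r)) huw
    apply Subtype.ext
    ext x
    by_cases hx : x ∈ Set.range c
    · obtain ⟨t, rfl⟩ := hx; rw [h1]
    · rw [h2 x hx]
  have hcard : Nat.card S = Fintype.card {g : Fin m ↪ Fin r // (g : Fin m → Fin r) ∈ E} *
      (r - m).descFactorial (k - m) := by
    rw [Nat.card_eq_fintype_card, Fintype.card_sigma, Finset.sum_const_nat, Finset.card_univ]
    intro g _
    rw [Fintype.card_embedding_eq]
    congr 1
    · rw [Fintype.card_subtype_compl (fun x => x ∈ Set.range g.1), Fintype.card_fin]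
      congr 1
      rw [← Fintype.card_congr (Equiv.ofInjective g.1 g.1.injective), Fintype.card_fin]
    · rw [Fintype.card_subtype_compl (fun x => x ∈ Set.range c), Fintype.card_fin]
      congr 1
      rw [← Fintype.card_congr (Equiv.ofInjective c c.injective), Fintype.card_fin]
  refine (Nat.card_le_card_of_injective F hF).trans ?_
  rw [hcard]
  refine Nat.mul_le_mul_right _ ?_
  rw [← Fintype.card_coe E]
  refine Fintype.card_le_of_injective (fun g => (⟨g.1, g.2⟩ : E)) ?_
  intro g h hgh
  simp only [Subtype.mk.injEq] at hgh
  exact Subtype.ext (DFunLike.coe_injective hgh)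

lemma perm_eq_of_order {k : ℕ} (τ τ' : Equiv.Perm (Fin k))
    (h : ∀ j j', τ j < τ j' ↔ τ' j < τ' j') : τ = τ' := by
  have hm : StrictMono (fun x => τ' (τ.symm x)) := by
    intro x y hxy
    rw [← h]; simpa using hxy
  let e : Fin k ≃o Fin k := StrictMono.orderIsoOfSurjective _ hm
    (τ'.surjective.comp τ.symm.surjective)
  have he : e = OrderIso.refl _ := Subsingleton.elim _ _
  ext j
  have h2 : e (τ j) = τ j := by rw [he]; rfl
  have h3 : e (τ j) = τ' j := by simp [e]
  rw [← h3, h2]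

lemma chunk_exists {n k m M : ℕ} (hm : 0 < m) (hM : 0 < M) (hMm : M * m ≤ k)
    (i : Fin k → Fin n) (hi : StrictMono i) :
    ∃ j : Fin M, ∃ a < n, ∀ t : ℕ, t < m → ∀ ht : j * m + t < k,
      a ≤ (i ⟨j * m + t, ht⟩ : ℕ) ∧ (i ⟨j * m + t, ht⟩ : ℕ) < a + n / M := by
  have hlt : ∀ j, j < M → ∀ t, t < m → j * m + t < k := by
    intro j hj t ht
    have : (j+1) * m ≤ M * m := Nat.mul_le_mul_right _ hj
    nlinarith
  let P : ℕ → ℕ := fun j => if h : j < M then i ⟨j * m, by have := hlt j h 0 hm; simpa using this⟩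
    else n
  have hex : ∃ j < M, P (j+1) ≤ P j + n / M := by
    by_contra! hcon
    have key : ∀ j ≤ M, j * (n / M + 1) ≤ P j := by
      intro j
      induction j with
      | zero => simp
      | succ j ih =>
        intro hj
        have h1 := ih (by omega)
        have h2 := hcon j (by omega)
        nlinarith
    have h1 := key M le_rfl
    have h2 : P M = n := by simp [P]
    have h3 := Nat.lt_mul_div_succ n hM
    omega
  obtain ⟨j, hj, hjP⟩ := hex
  have hPj : P j = i ⟨j * m, by have := hlt j hj 0 hm; simpa using this⟩ := by simp [P, hj]
  refine ⟨⟨j, hj⟩, P j, by rw [hPj]; exact Fin.is_lt _, ?_⟩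
  intro t ht htk
  constructor
  · rw [hPj]
    exact hi.monotone (by simp [Fin.le_def])
  · refine lt_of_lt_of_le ?_ hjP
    by_cases h : j + 1 < M
    · simp only [P, h, dite_true]
      refine hi ?_
      simp only [Fin.lt_def]
      nlinarith
    · simp only [P, h, dite_false]; exact Fin.is_lt _

lemma main_count {n r k m M : ℕ} (hm : 0 < m) (hM : 0 < M) (hMm : M * m ≤ k)
    (σ : Fin n → Fin r) (hσ : IsSuperpattern k σ) (z : ℝ) (hz0 : 0 < z) (hz1 : z ≤ 1) :
    (k.factorial : ℝ) * z ^ (n / M) ≤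
      M * n * (∑ d ∈ Finset.range r, z ^ (d+1)) ^ m * ((r - m).descFactorial (k - m) : ℝ) := by
  classical
  set G := ∑ d ∈ Finset.range r, z ^ (d+1) with hG
  have hlt : ∀ j : Fin M, ∀ t : Fin m, (j : ℕ) * m + t < k := by
    intro j t
    have : ((j:ℕ)+1) * m ≤ M * m := Nat.mul_le_mul_right _ j.2
    have := t.2
    nlinarith
  let c : Fin M → (Fin m ↪ Fin k) := fun j => ⟨fun t => ⟨j * m + t, hlt j t⟩, fun s t hst => by
    simp only [Fin.mk.injEq] at hst; ext; omega⟩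
  let E : ℕ → Finset (Fin m → Fin r) := fun a =>
    Finset.univ.filter (fun u : Fin m → Fin r => EmbIn σ a (a + n / M) m u)
  have hE : ∀ a, ((E a).card : ℝ) * z ^ (n / M) ≤ G ^ m := by
    intro a
    have h1 := embIn_count σ z hz0 hz1 (a + n/M) m a (Nat.le_add_right _ _)
    have h2 : 0 < z ^ a := by positivity
    rw [pow_add] at h1
    refine le_of_mul_le_mul_left ?_ h2
    calc _ = ((E a).card : ℝ) * (z ^ a * z ^ (n / M)) := by ring
      _ ≤ _ := h1
  choose i hi hio using hσ
  have hinj : ∀ τ, Function.Injective (fun j => σ (i τ j)) := by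
    intro τ j j' h
    simp only at h
    have h1 := hio τ j j'
    have h2 := hio τ j' j
    rw [h] at h1 h2
    simp only [lt_self_iff_false, false_iff, not_lt] at h1 h2
    exact τ.injective (le_antisymm h2 h1)
  let U : Equiv.Perm (Fin k) → (Fin k ↪ Fin r) := fun τ => ⟨_, hinj τ⟩
  have hU : Function.Injective U := by
    intro τ τ' h
    have h1 : ∀ j, σ (i τ j) = σ (i τ' j) := fun j => congrArg (fun u : Fin k ↪ Fin r => u j) h
    refine perm_eq_of_order _ _ fun j j' => ?_
    rw [← hio, ← hio, h1, h1]
  let A : Fin M → Fin n → Finset (Fin k ↪ Fin r) := fun j a =>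
    Finset.univ.filter (fun u => (fun t => u (c j t)) ∈ E a)
  have hA : ∀ j a, (A j a).card ≤ (E a).card * (r - m).descFactorial (k - m) := by
    intro j a
    have := card_extend (c j) (E a)
    rwa [Nat.card_eq_fintype_card, Fintype.card_subtype] at this
  have hsub : Finset.univ.image U ⊆ (Finset.univ : Finset (Fin M × Fin n)).biUnion
      (fun x => A x.1 x.2) := by
    intro u hu
    obtain ⟨τ, _, rfl⟩ := Finset.mem_image.mp hu
    obtain ⟨j, a, ha, hja⟩ := chunk_exists hm hM hMm (i τ) (hi τ)
    rw [Finset.mem_biUnion]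
    refine ⟨(j, ⟨a, ha⟩), Finset.mem_univ _, ?_⟩
    simp only [A, E, Finset.mem_filter, Finset.mem_univ, true_and]
    refine ⟨fun t => i τ (c j t), ?_, ?_, fun t => rfl⟩
    · intro s t hst
      refine hi τ ?_
      exact Nat.add_lt_add_left hst _
    · intro t
      exact hja t t.2 (hlt j t)
  have h1 : k.factorial ≤ ∑ x : Fin M × Fin n, (E x.2).card * (r - m).descFactorial (k - m) := by
    calc k.factorial = (Finset.univ.image U).card := by
          rw [Finset.card_image_of_injective _ hU, Finset.card_univ, Fintype.card_perm,
            Fintype.card_fin]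
      _ ≤ _ := Finset.card_le_card hsub
      _ ≤ _ := Finset.card_biUnion_le
      _ ≤ _ := Finset.sum_le_sum fun x _ => hA x.1 x.2
  have h2 : (k.factorial : ℝ) ≤
      ∑ x : Fin M × Fin n, ((E x.2).card : ℝ) * ((r - m).descFactorial (k - m) : ℝ) := by
    exact_mod_cast h1
  calc _ ≤ (∑ x : Fin M × Fin n, ((E x.2).card : ℝ) * ((r - m).descFactorial (k - m) : ℝ))
        * z ^ (n / M) := mul_le_mul_of_nonneg_right h2 (by positivity)
    _ = ∑ x : Fin M × Fin n, (((E x.2).card : ℝ) * z ^ (n/M)) *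
        ((r - m).descFactorial (k - m) : ℝ) := by
        rw [Finset.sum_mul]; exact Finset.sum_congr rfl fun x _ => by ring
    _ ≤ ∑ x : Fin M × Fin n, G ^ m * ((r - m).descFactorial (k - m) : ℝ) :=
        Finset.sum_le_sum fun x _ => mul_le_mul_of_nonneg_right (hE x.2) (by positivity)
    _ = _ := by
        rw [Finset.sum_const, Finset.card_univ, Fintype.card_prod, Fintype.card_fin,
          Fintype.card_fin, nsmul_eq_mul]
        push_cast; ring

/-! ### Asymptotics -/

lemma geom_bound (r : ℕ) (hr : 0 < r) (t : ℝ) (ht0 : 0 ≤ t) (ht1 : t ≤ 1) :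
    ∑ d ∈ Finset.range r, Real.exp (-(t / r)) ^ (d+1) ≤ r * Real.exp (-t/2 + t^2) := by
  have hr' : (0:ℝ) < r := by exact_mod_cast hr
  have h1 : ∀ d ∈ Finset.range r, Real.exp (-(t / r)) ^ (d+1) ≤
      1 - (t / r) * (d + 1 : ℕ) + t^2 := by
    intro d hd
    have hd' : ((d + 1 : ℕ) : ℝ) ≤ r := by exact_mod_cast Finset.mem_range.mp hd
    have hy : (t / r) * (d + 1 : ℕ) ≤ t := by
      rw [div_mul_eq_mul_div, div_le_iff₀ hr']
      exact mul_le_mul_of_nonneg_left hd' ht0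
    have hy0 : 0 ≤ (t / r) * (d + 1 : ℕ) := by positivity
    rw [← Real.exp_nat_mul]
    have h2 : ((d+1 : ℕ) : ℝ) * -(t / r) = -((t / r) * (d + 1 : ℕ)) := by ring
    rw [h2]
    set y := (t / r) * (d + 1 : ℕ)
    have h3 := Real.abs_exp_sub_one_sub_id_le (x := -y) (by rw [abs_neg, abs_of_nonneg hy0]; linarith)
    have h4 := (abs_le.mp h3).2
    nlinarith
  refine (Finset.sum_le_sum h1).trans ?_
  rw [Finset.sum_add_distrib, Finset.sum_sub_distrib, ← Finset.mul_sum]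
  have h5 : ∑ d ∈ Finset.range r, ((d + 1 : ℕ) : ℝ) = r * (r + 1) / 2 := by
    clear h1 hr hr'
    induction r with
    | zero => simp
    | succ r ih => rw [Finset.sum_range_succ, ih]; push_cast; ring
  rw [h5]
  simp only [Finset.sum_const, Finset.card_range, nsmul_eq_mul, mul_one]
  have h6 : t / r * (r * (r + 1) / 2) = t * (r+1) / 2 := by field_simp
  rw [h6]
  have h7 := Real.add_one_le_exp (-t/2 + t^2)
  nlinarith [mul_le_mul_of_nonneg_left h7 hr'.le]

lemma step_one {n r k m M : ℕ} (hm : 0 < m) (hM : 0 < M) (hMm : M * m ≤ k) (hkr : k ≤ r)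
    (σ : Fin n → Fin r) (hσ : IsSuperpattern k σ) (ε : ℝ) (hε : 0 < ε) (hε1 : ε ≤ 1)
    (hL : (n:ℝ) / M ≤ (1/2 - ε/2) * k * m) :
    (k.factorial : ℝ) ≤ M * n * (r:ℝ) ^ m * Real.exp (-(ε^2/16) * m) *
      ((r - m).descFactorial (k - m) : ℝ) := by
  have hk : 0 < k := lt_of_lt_of_le (Nat.mul_pos hM hm) hMm
  have hr : 0 < r := by omega
  have hr' : (0:ℝ) < r := by exact_mod_cast hr
  have hkr' : (k:ℝ) ≤ r := by exact_mod_cast hkr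
  set t := ε / 4 with ht
  have hz0 : 0 < Real.exp (-(t / r)) := Real.exp_pos _
  have hz1 : Real.exp (-(t / r)) ≤ 1 := by
    rw [Real.exp_le_one_iff]
    have : 0 ≤ t / r := by positivity
    linarith
  have h1 := main_count hm hM hMm σ hσ _ hz0 hz1
  have hG := geom_bound r hr t (by positivity) (by linarith)
  have hG0 : 0 ≤ ∑ d ∈ Finset.range r, Real.exp (-(t / r)) ^ (d+1) :=
    Finset.sum_nonneg fun i _ => by positivity
  have hGm := pow_le_pow_left₀ hG0 hG m
  have hz : Real.exp (-(t * (1/2 - ε/2) * m)) ≤ Real.exp (-(t / r)) ^ (n / M) := by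
    rw [← Real.exp_nat_mul]
    apply Real.exp_le_exp.mpr
    have h2 : ((n / M : ℕ) : ℝ) ≤ (n:ℝ) / M := Nat.cast_div_le
    have h3 : ((n / M : ℕ) : ℝ) ≤ (1/2 - ε/2) * m * r := by
      have : (1/2 - ε/2) * m * k ≤ (1/2 - ε/2) * m * r :=
        mul_le_mul_of_nonneg_left hkr' (mul_nonneg (by linarith) (by positivity))
      linarith
    have h4 : (t / r) * ((n / M : ℕ) : ℝ) ≤ (t / r) * ((1/2 - ε/2) * m * r) :=
      mul_le_mul_of_nonneg_left h3 (by positivity)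
    have h5 : (t / r) * ((1/2 - ε/2) * m * r) = t * (1/2 - ε/2) * m := by field_simp
    linarith
  have h2 : (k.factorial : ℝ) * Real.exp (-(t * (1/2 - ε/2) * m)) ≤
      M * n * (r * Real.exp (-t/2 + t^2)) ^ m * ((r - m).descFactorial (k - m) : ℝ) := by
    refine (mul_le_mul_of_nonneg_left hz (by positivity)).trans (h1.trans ?_)
    gcongr
  have h3 : (k.factorial : ℝ) = (k.factorial : ℝ) * Real.exp (-(t * (1/2 - ε/2) * m)) *
      Real.exp (t * (1/2 - ε/2) * m) := by
    rw [mul_assoc, ← Real.exp_add]; simp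
  rw [h3]
  refine (mul_le_mul_of_nonneg_right h2 (Real.exp_pos _).le).trans (le_of_eq ?_)
  rw [mul_pow, ← Real.exp_nat_mul]
  have h4 : Real.exp (-(ε^2/16) * m) =
      Real.exp (m * (-t/2 + t^2)) * Real.exp (t * (1/2 - ε/2) * m) := by
    rw [← Real.exp_add]; congr 1; rw [ht]; ring
  rw [h4]; ring

lemma step_two {r k m M : ℕ} (hM : 2 ≤ M) (hm : 0 < m) (hMm : M * m ≤ k) (hkr : k ≤ r) (X : ℝ)
    (hX : 0 ≤ X)
    (h : (k.factorial : ℝ) ≤ X * (r:ℝ) ^ m * ((r - m).descFactorial (k - m) : ℝ)) :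
    1 ≤ X * Real.exp (m / (M - 1 : ℝ)) * (r.choose k : ℝ) := by
  have hmk : 2 * m ≤ k := (Nat.mul_le_mul_right m hM).trans hMm
  have h1 : ((r - m).descFactorial (k - m) : ℝ) * (r.descFactorial m : ℝ) =
      (k.factorial : ℝ) * (r.choose k : ℝ) := by
    have := Nat.descFactorial_mul_descFactorial (n := r) (show m ≤ k by omega)
    rw [Nat.descFactorial_eq_factorial_mul_choose r k] at this
    exact_mod_cast this
  have hkf : (0:ℝ) < k.factorial := by exact_mod_cast k.factorial_pos
  have hdp : (0:ℝ) < r.descFactorial m := by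
    exact_mod_cast Nat.descFactorial_pos.mpr (by omega)
  have h2 : (r.descFactorial m : ℝ) ≤ X * (r:ℝ) ^ m * (r.choose k : ℝ) := by
    refine le_of_mul_le_mul_left ?_ hkf
    calc _ ≤ (X * (r:ℝ) ^ m * ((r - m).descFactorial (k - m) : ℝ)) * (r.descFactorial m : ℝ) :=
          mul_le_mul_of_nonneg_right h hdp.le
      _ = X * (r:ℝ) ^ m * (((r - m).descFactorial (k - m) : ℝ) * (r.descFactorial m : ℝ)) := by ring
      _ = _ := by rw [h1]; ring
  have hM1 : (0:ℝ) < M - 1 := by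
    have : (2:ℝ) ≤ M := by exact_mod_cast hM
    linarith
  have h3 : (r:ℝ) ≤ Real.exp (1 / (M - 1 : ℝ)) * ((r + 1 - m : ℕ) : ℝ) := by
    have h4 := Real.add_one_le_exp (1 / (M - 1 : ℝ))
    have h5 : ((r + 1 - m : ℕ) : ℝ) = r + 1 - m := by
      rw [Nat.cast_sub (by omega)]; push_cast; ring
    have h6 : (M:ℝ) * m ≤ r := by exact_mod_cast hMm.trans hkr
    have h7 : (0:ℝ) ≤ r + 1 - m := by rw [← h5]; positivity
    rw [h5]
    refine le_trans ?_ (mul_le_mul_of_nonneg_right h4 h7)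
    have h8 : 1 / (M - 1 : ℝ) + 1 = M / (M - 1) := by field_simp; ring
    rw [h8, div_mul_eq_mul_div, le_div_iff₀ hM1]
    nlinarith
  have h9 : (r:ℝ) ^ m ≤ Real.exp (m / (M - 1 : ℝ)) * (r.descFactorial m : ℝ) := by
    have h10 := pow_le_pow_left₀ (by positivity) h3 m
    rw [mul_pow, ← Real.exp_nat_mul, mul_one_div] at h10
    refine h10.trans (mul_le_mul_of_nonneg_left ?_ (Real.exp_pos _).le)
    exact_mod_cast Nat.pow_sub_le_descFactorial r m
  refine le_of_mul_le_mul_right ?_ hdp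
  calc 1 * (r.descFactorial m : ℝ) ≤ X * (r:ℝ) ^ m * (r.choose k : ℝ) := by rw [one_mul]; exact h2
    _ ≤ X * (Real.exp (m / (M - 1 : ℝ)) * (r.descFactorial m : ℝ)) * (r.choose k : ℝ) := by
        gcongr
    _ = _ := by ring

lemma choose_bound (r k : ℕ) (hkr : k ≤ r) (y : ℝ) :
    (r.choose k : ℝ) ≤ Real.exp (Real.exp (-y) * r + y * (r - k)) := by
  have h1 : Real.exp (-y) ^ (r - k) * (r.choose k : ℝ) ≤ (1 + Real.exp (-y)) ^ r := by
    rw [add_pow]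
    refine le_trans (le_of_eq ?_) (Finset.single_le_sum (f := fun i =>
      (1:ℝ) ^ i * Real.exp (-y) ^ (r - i) * (r.choose i : ℝ)) (fun i _ => by positivity)
      (Finset.mem_range.mpr (Nat.lt_succ_of_le hkr)))
    simp
  have h2 : (1 + Real.exp (-y)) ^ r ≤ Real.exp (Real.exp (-y) * r) := by
    have h3 := Real.add_one_le_exp (Real.exp (-y))
    have := pow_le_pow_left₀ (by positivity) h3 r
    rw [← Real.exp_nat_mul] at this
    rw [mul_comm (Real.exp (-y)), add_comm]; exact this
  rw [← Real.exp_nat_mul, Nat.cast_sub hkr] at h1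
  have h4 : (r.choose k : ℝ) = Real.exp (((r:ℝ) - k) * -y) * (r.choose k : ℝ) *
      Real.exp (y * (r - k)) := by
    rw [mul_right_comm, ← Real.exp_add]; ring_nf; simp
  rw [h4, Real.exp_add]
  exact mul_le_mul_of_nonneg_right (h1.trans h2) (Real.exp_pos _).le

set_option maxHeartbeats 1000000 in
lemma eventually_lower (r : ℕ → ℕ) (hr : ∀ k, k < r k)
    (hlim : Filter.Tendsto (fun k => (r k : ℝ) / (k : ℝ)) Filter.atTop (nhds 1))
    (ε : ℝ) (hε : 0 < ε) (hε1 : ε < 1/2) :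
    ∀ᶠ k : ℕ in Filter.atTop, (1/2 - ε) * (k:ℝ)^2 ≤ (minSuperpatternLength k (r k) : ℝ) := by
  set c := ε^2/16 with hc
  have hc0 : 0 < c := by positivity
  have hc1 : c < 1 := by rw [hc]; nlinarith
  obtain ⟨M, hM⟩ := exists_nat_gt (2 / c + 1)
  have h2c : 2 < 2 / c := by rw [lt_div_iff₀ hc0]; linarith
  have hM3 : (3:ℝ) < M := by linarith
  have hM2 : 2 ≤ M := by
    have : (2:ℝ) < M := by linarith
    exact_mod_cast this.le
  have hMc : 1 / (M - 1 : ℝ) ≤ c / 2 := by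
    rw [div_le_iff₀ (by linarith)]
    have : 2 / c < M - 1 := by linarith
    rw [div_lt_iff₀ hc0] at this
    linarith
  have hM0 : (0:ℝ) < M := by linarith
  set y : ℝ := 32 * M / c with hy
  have hy0 : 0 < y := by positivity
  have hy1 : 1 ≤ y := by rw [hy, le_div_iff₀ hc0]; linarith
  have hey : Real.exp (-y) ≤ c / (32 * M) := by
    have h1 : y ≤ Real.exp y := by have := Real.add_one_le_exp y; linarith
    have h2 : c / (32 * M) = y⁻¹ := by rw [hy, inv_div]
    rw [h2, Real.exp_neg]
    exact inv_anti₀ hy0 h1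
  set δ : ℝ := c / (16 * M * y) with hδ
  have hδ0 : 0 < δ := by positivity
  have hδ1 : δ ≤ 1 := by
    rw [hδ, div_le_one (by positivity)]
    nlinarith
  have hyδ : y * δ = c / (16 * M) := by rw [hδ]; field_simp
  set b : ℝ := 3 * c / (8 * M) with hb
  have hb0 : 0 < b := by positivity
  -- eventual facts
  have ev1 : ∀ᶠ k : ℕ in Filter.atTop, (r k : ℝ) / k < 1 + δ :=
    hlim.eventually (gt_mem_nhds (by linarith))
  have ev2 : ∀ᶠ k : ℕ in Filter.atTop, (M:ℝ) / ε ≤ (k:ℝ) :=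
    tendsto_natCast_atTop_atTop.eventually_ge_atTop _
  have ev3 : ∀ᶠ k : ℕ in Filter.atTop,
      M * Real.exp (c/2) * ((k:ℝ)^2 * Real.exp (-(b * k))) < 1 := by
    have h1 := (Real.tendsto_pow_mul_exp_neg_atTop_nhds_zero 2).comp
      ((tendsto_natCast_atTop_atTop (R := ℝ)).const_mul_atTop hb0)
    have h2 := h1.const_mul (M * Real.exp (c/2) / b^2)
    rw [mul_zero] at h2
    filter_upwards [h2.eventually (gt_mem_nhds one_pos)] with k hk
    refine lt_of_eq_of_lt ?_ hk
    simp only [Function.comp]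
    field_simp
  filter_upwards [ev1, ev2, ev3] with k h1 h2 h3
  by_contra! hcon
  have hspec := minSuperpatternLength_spec k (r k) (hr k)
  generalize minSuperpatternLength k (r k) = n at hspec hcon
  obtain ⟨σ, hσ⟩ := hspec
  have hkM : (M:ℝ) ≤ ε * k := by
    rw [div_le_iff₀ hε] at h2; linarith
  have hk0 : (0:ℝ) < k := by
    by_contra! h
    nlinarith
  have hkMn : M ≤ k := by
    have : (M:ℝ) ≤ k := by nlinarith
    exact_mod_cast this
  set m := k / M with hm
  have hm0 : 0 < m := Nat.div_pos hkMn (by omega)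
  have hMm : M * m ≤ k := Nat.mul_div_le k M
  have hmlow : (k:ℝ) ≤ M * m + M := by
    have := Nat.lt_mul_div_succ k (show 0 < M by omega)
    have h5 : k ≤ M * (m + 1) := this.le
    have h6 : (k:ℝ) ≤ M * (m + 1) := by exact_mod_cast h5
    linarith
  have hkr : k ≤ r k := (hr k).le
  have hL : (n:ℝ) / M ≤ (1/2 - ε/2) * k * m := by
    rw [div_le_iff₀ hM0]
    refine hcon.le.trans ?_
    have h5 : (1/2 - ε) * k ≤ (1/2 - ε/2) * (M * m) := by
      have h6 : (1/2 - ε/2) * (k - M) ≤ (1/2 - ε/2) * (M * m) :=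
        mul_le_mul_of_nonneg_left (by linarith) (by linarith)
      nlinarith
    nlinarith [mul_le_mul_of_nonneg_right h5 hk0.le]
  have s1 := step_one hm0 (by omega) hMm hkr σ hσ ε hε (by linarith) hL
  have s2 := step_two hM2 hm0 hMm hkr (M * n * Real.exp (-c * m)) (by positivity)
    (s1.trans (le_of_eq (by ring)))
  have s3 := choose_bound (r k) k hkr y
  have hrk : (r k : ℝ) ≤ (1 + δ) * k := by
    rw [div_lt_iff₀ hk0] at h1; exact h1.le
  have hrk2 : (r k : ℝ) ≤ 2 * k := by
    have := mul_le_mul_of_nonneg_right hδ1 hk0.le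
    linarith
  have hexp : Real.exp (-y) * r k + y * (r k - k) ≤ c / (8 * M) * k := by
    have e1 : Real.exp (-y) * r k ≤ c / (32 * M) * (2 * k) :=
      mul_le_mul hey hrk2 (by positivity) (by positivity)
    have e2 : y * (r k - k) ≤ y * (δ * k) := mul_le_mul_of_nonneg_left (by linarith) hy0.le
    have e3 : y * (δ * k) = c / (16 * M) * k := by rw [← mul_assoc, hyδ]
    have e4 : c / (32 * M) * (2 * k) + c / (16 * M) * k = c / (8 * M) * k := by
      field_simp; norm_num
    linarith
  have hch : ((r k).choose k : ℝ) ≤ Real.exp (c / (8 * M) * k) :=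
    s3.trans (Real.exp_le_exp.mpr hexp)
  have hnk : (n:ℝ) ≤ (k:ℝ)^2 := by nlinarith
  have hfin : Real.exp (-c * m) * Real.exp (m / (M - 1 : ℝ)) * Real.exp (c / (8 * M) * k) ≤
      Real.exp (c/2) * Real.exp (-(b * k)) := by
    rw [← Real.exp_add, ← Real.exp_add, ← Real.exp_add]
    apply Real.exp_le_exp.mpr
    have f1 : m / (M - 1 : ℝ) ≤ c / 2 * m := by
      rw [div_eq_mul_one_div, mul_comm]
      exact mul_le_mul_of_nonneg_right hMc (by positivity)
    have f2 : (k:ℝ) / M ≤ m + 1 := by rw [div_le_iff₀ hM0]; linarith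
    have f3 : c / 2 * (k / M) ≤ c / 2 * (m + 1) := mul_le_mul_of_nonneg_left f2 (by positivity)
    have f4 : b * k = 3 / 4 * (c / 2 * (k / M)) := by rw [hb]; field_simp; norm_num
    have f5 : c / (8 * M) * k = 1 / 4 * (c / 2 * (k / M)) := by field_simp; norm_num
    rw [f4, f5]
    linarith
  have : (1:ℝ) < 1 := by
    calc (1:ℝ) ≤ M * n * Real.exp (-c * m) * Real.exp (m / (M - 1 : ℝ)) * ((r k).choose k : ℝ) := s2
      _ ≤ M * (k:ℝ)^2 * Real.exp (-c * m) * Real.exp (m / (M - 1 : ℝ)) *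
          Real.exp (c / (8 * M) * k) := by gcongr
      _ = M * (k:ℝ)^2 * (Real.exp (-c * m) * Real.exp (m / (M - 1 : ℝ)) *
          Real.exp (c / (8 * M) * k)) := by ring
      _ ≤ M * (k:ℝ)^2 * (Real.exp (c/2) * Real.exp (-(b * k))) := by gcongr
      _ = M * Real.exp (c/2) * ((k:ℝ)^2 * Real.exp (-(b * k))) := by ring
      _ < 1 := h3
  exact lt_irrefl _ this

/-- If `r_k > k` for all `k` and `r_k / k → 1`, then `f(k; r_k) / k² → 1/2`. -/
theorem superpattern_length_asymptotics (r : ℕ → ℕ) (hr : ∀ k, k < r k)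
    (hlim : Filter.Tendsto (fun k => (r k : ℝ) / (k : ℝ)) Filter.atTop (nhds 1)) :
    Filter.Tendsto (fun k => (minSuperpatternLength k (r k) : ℝ) / (k : ℝ)^2)
      Filter.atTop (nhds (1/2)) := by
  rw [tendsto_order]
  constructor
  · intro a ha
    set ε := min ((1/2 - a)/2) (1/4) with hεdef
    have hε : 0 < ε := lt_min (by linarith) (by norm_num)
    have hε1 : ε < 1/2 := (min_le_right _ _).trans_lt (by norm_num)
    have hε2 : ε ≤ (1/2 - a)/2 := min_le_left _ _
    filter_upwards [eventually_lower r hr hlim ε hε hε1, Filter.eventually_gt_atTop 0] with k hk hk0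
    have hk0' : (0:ℝ) < k := by exact_mod_cast hk0
    rw [lt_div_iff₀ (by positivity)]
    refine lt_of_lt_of_le ?_ hk
    exact mul_lt_mul_of_pos_right (by linarith) (by positivity)
  · intro a ha
    have ev : ∀ᶠ k : ℕ in Filter.atTop, 1 / (a - 1/2) < (k:ℝ) :=
      tendsto_natCast_atTop_atTop.eventually_gt_atTop _
    filter_upwards [ev, Filter.eventually_gt_atTop 0] with k hk hk0
    have hk0' : (0:ℝ) < k := by exact_mod_cast hk0
    have h1 : (minSuperpatternLength k (r k) : ℝ) ≤ k * (((k / 2 : ℕ) : ℝ) + 1) := by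
      exact_mod_cast minSuperpatternLength_le k (r k) (hr k)
    have h2 : ((k / 2 : ℕ) : ℝ) ≤ (k:ℝ) / 2 := by
      have := @Nat.cast_div_le ℝ _ _ _ k 2
      exact_mod_cast this
    rw [div_lt_iff₀ (by linarith)] at hk
    rw [div_lt_iff₀ (by positivity)]
    nlinarith
end

section
/- For every word σ ∈ [k]^n there exists a k-DFA D with state set {0,1,…,n} and root 0 such that every permutation τ ∈ S_k that is a pattern of σ satisfies c_D(0, τ) ≤ n (reading τ as the word τ(1),…,τ(k)). Consequently, F(k,n) ≤ G(k,n,n+1). -/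
/-- A weighted DFA on the alphabet `[k]` (modelled as `Fin k`) with state type `V`:
a transition function, a root state, and a cost function into `ℕ∞`. -/
structure WDFA (k : ℕ) (V : Type*) where
  trans : V → Fin k → V
  root : V
  cost : V → Fin k → ℕ∞

/-- The final state of the walk from `v` reading the word `w`. -/
def WDFA.walkEnd {k : ℕ} {V : Type*} (D : WDFA k V) : V → List (Fin k) → V
  | v, [] => v
  | v, t :: w => D.walkEnd (D.trans v t) w

/-- The cost of reading the word `w` starting from state `v`. -/
def WDFA.wordCost {k : ℕ} {V : Type*} (D : WDFA k V) : V → List (Fin k) → ℕ∞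
  | _, [] => 0
  | v, t :: w => D.cost v t + D.wordCost (D.trans v t) w

/-- A `k`-DFA: a weighted DFA on alphabet `[k]` in which, at every state `v`, the
costs `c(v, ·)` form a bijection onto `{1, …, k}`. -/
def WDFA.IsKDFA {k : ℕ} {V : Type*} (D : WDFA k V) : Prop :=
  ∀ v : V, ∃ π : Equiv.Perm (Fin k), ∀ t : Fin k, D.cost v t = (((π t : ℕ) + 1 : ℕ) : ℕ∞)

/-- A permutation `τ ∈ S_k` read as the word `τ(1), …, τ(k)`. -/
def permWord {k : ℕ} (τ : Equiv.Perm (Fin k)) : List (Fin k) :=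
  (List.finRange k).map τ

/-- `F(k, n)`: the maximum, over words `σ ∈ [k]^n`, of the number of permutations
`τ ∈ S_k` that `σ` contains as a pattern. -/
noncomputable def maxPatternCount (k n : ℕ) : ℕ :=
  (Finset.univ : Finset (Fin n → Fin k)).sup fun σ =>
    Nat.card {τ : Equiv.Perm (Fin k) // ContainsPattern σ τ}

/-- `G(k, n, N)`: the maximum, over `k`-DFAs `D` with at most `N` states (modelled with
state set `Fin N`), of the number of permutations `τ ∈ S_k` with `c(root(D), τ) ≤ n`. -/
noncomputable def maxCheapPermCount (k n N : ℕ) : ℕ :=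
  sSup {m : ℕ | ∃ D : WDFA k (Fin N), D.IsKDFA ∧
    m = Nat.card {τ : Equiv.Perm (Fin k) // D.wordCost D.root (permWord τ) ≤ (n : ℕ∞)}}

open Classical in
/-- The key of the letter `t` at state `v`: the first position `p ≥ v` with `σ p = t`,
or `n + t` if there is none. -/
noncomputable def nextKey {k n : ℕ} (σ : Fin n → Fin k) (v : ℕ) (t : Fin k) : ℕ :=
  if h : ∃ p : ℕ, v ≤ p ∧ ∃ hp : p < n, σ ⟨p, hp⟩ = t then Nat.find h else n + t

theorem nextKey_ge {k n : ℕ} (σ : Fin n → Fin k) (v : ℕ) (hv : v ≤ n) (t : Fin k) :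
    v ≤ nextKey σ v t := by
  classical
  unfold nextKey
  split_ifs with h
  · exact (Nat.find_spec h).1
  · omega

theorem nextKey_le {k n : ℕ} (σ : Fin n → Fin k) (v : ℕ) (t : Fin k) (p : ℕ)
    (hvp : v ≤ p) (hp : p < n) (hs : σ ⟨p, hp⟩ = t) : nextKey σ v t ≤ p := by
  classical
  unfold nextKey
  have h : ∃ p : ℕ, v ≤ p ∧ ∃ hp : p < n, σ ⟨p, hp⟩ = t := ⟨p, hvp, hp, hs⟩
  rw [dif_pos h]
  exact Nat.find_min' h ⟨hvp, hp, hs⟩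

theorem nextKey_inj {k n : ℕ} (σ : Fin n → Fin k) (v : ℕ) :
    Function.Injective (nextKey σ v) := by
  classical
  intro a b hab
  unfold nextKey at hab
  split_ifs at hab with h1 h2 h2
  · obtain ⟨_, hp, e1⟩ := Nat.find_spec h1
    obtain ⟨_, hq, e2⟩ := Nat.find_spec h2
    rw [← e1, ← e2]
    congr 1
    exact Fin.ext hab
  · obtain ⟨_, hp, e1⟩ := Nat.find_spec h1
    omega
  · obtain ⟨_, hp, e1⟩ := Nat.find_spec h2
    omega
  · exact Fin.ext (by omega)

/-- The number of letters occurring strictly before `t`. -/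
noncomputable def letterRank {k n : ℕ} (σ : Fin n → Fin k) (v : ℕ) (t : Fin k) : ℕ :=
  (Finset.univ.filter fun s : Fin k => nextKey σ v s < nextKey σ v t).card

theorem letterRank_lt {k n : ℕ} (σ : Fin n → Fin k) (v : ℕ) (t : Fin k) :
    letterRank σ v t < k := by
  unfold letterRank
  calc _ < (Finset.univ : Finset (Fin k)).card :=
        Finset.card_lt_card (Finset.filter_ssubset.2 ⟨t, Finset.mem_univ _, by simp⟩)
    _ = k := by simp

theorem letterRank_mono {k n : ℕ} (σ : Fin n → Fin k) (v : ℕ) (s t : Fin k)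
    (h : nextKey σ v s < nextKey σ v t) : letterRank σ v s < letterRank σ v t := by
  unfold letterRank
  apply Finset.card_lt_card
  rw [Finset.ssubset_iff_of_subset]
  · exact ⟨s, by simpa using h, by simp⟩
  · intro x hx
    simp only [Finset.mem_filter, Finset.mem_univ, true_and] at hx ⊢
    omega

theorem letterRank_inj {k n : ℕ} (σ : Fin n → Fin k) (v : ℕ) :
    Function.Injective (letterRank σ v) := by
  intro a b hab
  apply nextKey_inj σ v
  rcases lt_trichotomy (nextKey σ v a) (nextKey σ v b) with h | h | h
  · have := letterRank_mono σ v _ _ h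
    omega
  · exact h
  · have := letterRank_mono σ v _ _ h
    omega

theorem letterRank_le {k n : ℕ} (σ : Fin n → Fin k) (v : ℕ) (hv : v ≤ n) (t : Fin k) :
    letterRank σ v t + v ≤ nextKey σ v t := by
  have h : letterRank σ v t ≤ (Finset.Ico v (nextKey σ v t)).card := by
    unfold letterRank
    apply Finset.card_le_card_of_injOn (nextKey σ v)
    · intro s hs
      simp only [Finset.coe_filter, Finset.mem_univ, true_and, Set.mem_ofPred_eq] at hs
      simp only [Finset.coe_Ico, Set.mem_Ico]
      exact ⟨nextKey_ge σ v hv s, hs⟩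
    · exact (nextKey_inj σ v).injOn
  have := nextKey_ge σ v hv t
  rw [Nat.card_Ico] at h
  omega

/-- The greedy automaton of a word. -/
noncomputable def greedyDFA {k n : ℕ} (σ : Fin n → Fin k) : WDFA k (Fin (n + 1)) where
  trans v t := ⟨min (nextKey σ v t + 1) n, by omega⟩
  root := 0
  cost v t := ((letterRank σ v t + 1 : ℕ) : ℕ∞)

theorem greedyDFA_isKDFA {k n : ℕ} (σ : Fin n → Fin k) : (greedyDFA σ).IsKDFA := by
  intro v
  let f : Fin k → Fin k := fun t => ⟨letterRank σ v t, letterRank_lt σ v t⟩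
  have hf : Function.Injective f := fun a b hab =>
    letterRank_inj σ v (congrArg Fin.val hab)
  refine ⟨Equiv.ofBijective f (Finite.injective_iff_bijective.1 hf), fun t => ?_⟩
  rfl

/-- The word `w` embeds in `σ` from position `v` on. -/
def EmbedsFrom {k n : ℕ} (σ : Fin n → Fin k) : ℕ → List (Fin k) → Prop
  | _, [] => True
  | v, t :: w => ∃ p : ℕ, v ≤ p ∧ ∃ hp : p < n, σ ⟨p, hp⟩ = t ∧ EmbedsFrom σ (p + 1) w

theorem EmbedsFrom.mono {k n : ℕ} {σ : Fin n → Fin k} {u v : ℕ} {w : List (Fin k)}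
    (huv : u ≤ v) (h : EmbedsFrom σ v w) : EmbedsFrom σ u w := by
  cases w with
  | nil => trivial
  | cons t w =>
    obtain ⟨p, h1, h2⟩ := h
    exact ⟨p, huv.trans h1, h2⟩

theorem greedyDFA_cost {k n : ℕ} (σ : Fin n → Fin k) (w : List (Fin k)) :
    ∀ v : Fin (n + 1), EmbedsFrom σ v w →
      (greedyDFA σ).wordCost v w + ((v : ℕ) : ℕ∞) ≤ (n : ℕ∞) := by
  induction w with
  | nil =>
    intro v _
    simp only [WDFA.wordCost, zero_add]
    exact_mod_cast (by omega : (v : ℕ) ≤ n)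
  | cons t w ih =>
    rintro v ⟨p, hvp, hp, hs, hw⟩
    have hle := nextKey_le σ v t p hvp hp hs
    have hr := letterRank_le σ v (by omega) t
    have hval : (((greedyDFA σ).trans v t : Fin (n + 1)) : ℕ) = nextKey σ v t + 1 := by
      change min (nextKey σ v t + 1) n = _
      omega
    have := ih ((greedyDFA σ).trans v t) (by rw [hval]; exact hw.mono (by omega))
    rw [hval] at this
    refine le_trans ?_ this
    change ((letterRank σ v t + 1 : ℕ) : ℕ∞) + _ + _ ≤ _
    rw [add_right_comm, add_comm]
    gcongr
    exact_mod_cast (by omega : letterRank σ v t + 1 + v ≤ nextKey σ v t + 1)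

theorem embedsFrom_map {k n : ℕ} (σ : Fin n → Fin k) (τ : Equiv.Perm (Fin k))
    (i : Fin k → Fin n) (hi : StrictMono i) (hσ : ∀ j, σ (i j) = τ j) (l : List (Fin k)) :
    ∀ v : ℕ, l.Pairwise (· < ·) → (∀ j ∈ l, v ≤ i j) → EmbedsFrom σ v (l.map τ) := by
  induction l with
  | nil => intros; trivial
  | cons a l ih =>
    intro v hl hv
    rw [List.pairwise_cons] at hl
    refine ⟨i a, hv a (by simp), (i a).isLt, hσ a, ih _ hl.2 fun j hj => ?_⟩
    exact hi (hl.1 j hj)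

theorem pattern_eq {k n : ℕ} (σ : Fin n → Fin k) (τ : Equiv.Perm (Fin k))
    (i : Fin k → Fin n) (h : ∀ j j' : Fin k, σ (i j) < σ (i j') ↔ τ j < τ j') (j : Fin k) :
    σ (i j) = τ j := by
  have hm : StrictMono fun x : Fin k => σ (i (τ.symm x)) := by
    intro a b hab
    exact (h _ _).2 (by simpa using hab)
  have hid : (fun x : Fin k => σ (i (τ.symm x))) = id := by
    apply (StrictMono.range_inj hm strictMono_id).1
    rw [(Finite.injective_iff_surjective.1 hm.injective).range_eq, Set.range_id]
  simpa using congrFun hid (τ j)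

theorem greedyDFA_captures {k n : ℕ} (σ : Fin n → Fin k) (τ : Equiv.Perm (Fin k))
    (h : ContainsPattern σ τ) :
    (greedyDFA σ).wordCost (greedyDFA σ).root (permWord τ) ≤ (n : ℕ∞) := by
  obtain ⟨i, hi, hσ⟩ := h
  have he := embedsFrom_map σ τ i hi (pattern_eq σ τ i hσ) (List.finRange k) 0
    (List.pairwise_lt_finRange k) (by simp)
  exact le_trans le_self_add (greedyDFA_cost σ _ 0 he)

/-- For every `σ ∈ [k]^n` there is a `k`-DFA `D` with states `{0, …, n}` and root `0`
such that every pattern `τ ∈ S_k` of `σ` has `c_D(0, τ) ≤ n`. Consequently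
`F(k,n) ≤ G(k,n,n+1)`. -/
theorem exists_kDFA_capturing_patterns (k n : ℕ) :
    (∀ σ : Fin n → Fin k, ∃ D : WDFA k (Fin (n + 1)), D.IsKDFA ∧ D.root = 0 ∧
      ∀ τ : Equiv.Perm (Fin k), ContainsPattern σ τ →
        D.wordCost D.root (permWord τ) ≤ (n : ℕ∞)) ∧
    maxPatternCount k n ≤ maxCheapPermCount k n (n + 1) := by
  refine ⟨fun σ => ⟨greedyDFA σ, greedyDFA_isKDFA σ, rfl, greedyDFA_captures σ⟩, ?_⟩
  unfold maxPatternCount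
  apply Finset.sup_le
  intro σ _
  refine le_trans ?_ (le_csSup ?_ ⟨greedyDFA σ, greedyDFA_isKDFA σ, rfl⟩)
  · exact Nat.card_le_card_of_injective
      (Subtype.map id fun τ hτ => greedyDFA_captures σ τ hτ)
      (Subtype.map_injective _ Function.injective_id)
  · refine ⟨Nat.card (Equiv.Perm (Fin k)), ?_⟩
    rintro m ⟨D, _, rfl⟩
    exact Nat.card_le_card_of_injective _ Subtype.val_injective
end

section
/- Let D be a k-DFA with state set V, let ε > 0, and let M, L be positive integers with ML ≤ k. Then P(ML, ε) ≤ M·|V|·P(L, ε), where P(L', ε) = max_{v ∈ V} P(v, L', ε). -/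
/-- A function-word `w : Fin L → Fin k` viewed as a list `w(1), …, w(L)`. -/
def listOf {k L : ℕ} (w : Fin L → Fin k) : List (Fin k) :=
  (List.finRange L).map w

/-- `P(v, L, ε)`: the probability that `c(v, w) < (1/2 − ε)kL` for a uniformly random
permutational (injective) word `w` of length `L` on `[k]`, expressed as
(number of such words) · (k−L)!/k!. A cost of `∞` is never `< (1/2 − ε)kL`. -/
noncomputable def badProb {k : ℕ} {V : Type*} (D : WDFA k V) (v : V) (L : ℕ) (ε : ℝ) : ℝ :=
  (Nat.card {w : Fin L → Fin k // Function.Injective w ∧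
      ∃ m : ℕ, D.wordCost v (listOf w) = (m : ℕ∞) ∧ (m : ℝ) < (1/2 - ε) * k * L} : ℝ)
    * (Nat.factorial (k - L)) / (Nat.factorial k)

theorem wordCost_append {k : ℕ} {V : Type*} (D : WDFA k V) (l₁ l₂ : List (Fin k)) (v : V) :
    D.wordCost v (l₁ ++ l₂) = D.wordCost v l₁ + D.wordCost (D.walkEnd v l₁) l₂ := by
  induction l₁ generalizing v with
  | nil => simp [WDFA.wordCost, WDFA.walkEnd]
  | cons t l ih => simp [WDFA.wordCost, WDFA.walkEnd, ih, add_assoc]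

theorem exists_bad_block {k : ℕ} {V : Type*} (D : WDFA k V) (L : ℕ) (c : ℝ) (M : ℕ)
    (l : List (Fin k)) (v : V) (m : ℕ) (hm : D.wordCost v l = (m : ℕ∞))
    (hlt : (m : ℝ) < M * c) :
    ∃ j < M, ∃ u : V, ∃ m' : ℕ,
      D.wordCost u ((l.drop (j * L)).take L) = (m' : ℕ∞) ∧ (m' : ℝ) < c := by
  induction M generalizing l v m with
  | zero =>
    have : (0 : ℝ) ≤ m := Nat.cast_nonneg m
    simp at hlt
    linarith
  | succ M ih =>
    rw [← List.take_append_drop L l, wordCost_append] at hm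
    have hfin : D.wordCost v (l.take L) + D.wordCost (D.walkEnd v (l.take L)) (l.drop L) ≠ ⊤ := by
      rw [hm]; exact ENat.natCast_ne_top m
    have h1 : D.wordCost v (l.take L) ≠ ⊤ := by
      intro h; rw [h] at hfin; simp at hfin
    have h2 : D.wordCost (D.walkEnd v (l.take L)) (l.drop L) ≠ ⊤ := by
      intro h; rw [h] at hfin; simp at hfin
    obtain ⟨a, ha⟩ := ENat.ne_top_iff_exists.mp h1
    obtain ⟨b, hb⟩ := ENat.ne_top_iff_exists.mp h2
    rw [← ha, ← hb] at hm
    have hab : a + b = m := by exact_mod_cast hm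
    by_cases hc : (a : ℝ) < c
    · exact ⟨0, Nat.succ_pos M, v, a, by simpa using ha.symm, hc⟩
    · have hb' : (b : ℝ) < M * c := by
        rw [← hab] at hlt
        push_cast at hlt
        linarith
      obtain ⟨j, hj, u, m', h, h'⟩ := ih (l.drop L) _ b hb.symm hb'
      refine ⟨j + 1, by omega, u, m', ?_, h'⟩
      rw [List.drop_drop] at h
      rw [← h]
      congr 3
      ring

/-- The `j`-th block of positions. -/
def blockEmb (M L j : ℕ) (hj : j < M) : Fin L ↪ Fin (M * L) where
  toFun i := ⟨j * L + i, by
    have h1 := i.2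
    have h2 : (j + 1) * L ≤ M * L := Nat.mul_le_mul_right L hj
    rw [add_mul] at h2
    omega⟩
  inj' a b h := by
    simp at h
    exact Fin.ext h

theorem listOf_block {k M L j : ℕ} (hj : j < M) (w : Fin (M * L) → Fin k) :
    ((listOf w).drop (j * L)).take L = listOf (w ∘ blockEmb M L j hj) := by
  have h2 : (j + 1) * L ≤ M * L := Nat.mul_le_mul_right L hj
  rw [add_mul] at h2
  apply List.ext_getElem
  · simp [listOf]; omega
  · intro i h1 h3
    simp [listOf, blockEmb]
    rfl

theorem card_restrict_le {k N L : ℕ} (e : Fin L ↪ Fin N) (A : Set (Fin L → Fin k))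
    (hA : ∀ g ∈ A, Function.Injective g) :
    Nat.card {w : Fin N → Fin k // Function.Injective w ∧ w ∘ e ∈ A} ≤
      Nat.card A * (k - L).descFactorial (N - L) := by
  classical
  let T := Σ g : A, (((Set.range e)ᶜ : Set (Fin N)) ↪ ((Set.range g.1)ᶜ : Set (Fin k)))
  have hT : Nat.card T = Nat.card A * (k - L).descFactorial (N - L) := by
    rw [Nat.card_eq_fintype_card, Fintype.card_sigma, Finset.sum_congr rfl
      (g := fun _ => (k - L).descFactorial (N - L))]
    · simp [Nat.card_eq_fintype_card]
    · intro g _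
      rw [Fintype.card_embedding_eq, Fintype.card_compl_set, Fintype.card_compl_set,
        Set.card_range_of_injective e.injective, Set.card_range_of_injective (hA g.1 g.2)]
      simp
  rw [← hT]
  let F : {w : Fin N → Fin k // Function.Injective w ∧ w ∘ e ∈ A} → T := fun w =>
    ⟨⟨w.1 ∘ e, w.2.2⟩,
      ⟨fun x => ⟨w.1 x.1, by
        rintro ⟨i, hi⟩
        exact x.2 ⟨i, w.2.1 hi⟩⟩, fun x y h => by
          simp only [Subtype.mk.injEq] at h
          exact Subtype.ext (w.2.1 h)⟩⟩
  apply Nat.card_le_card_of_injective F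
  have key : ∀ w x, (hx : x ∈ (Set.range e)ᶜ) → ((F w).2 ⟨x, hx⟩ : Fin k) = w.1 x :=
    fun _ _ _ => rfl
  have key' : ∀ w i, (F w).1.1 i = w.1 (e i) := fun _ _ => rfl
  intro w w' h
  apply Subtype.ext
  funext x
  by_cases hx : x ∈ Set.range e
  · obtain ⟨i, rfl⟩ := hx
    rw [← key', ← key', h]
  · rw [← key w x hx, ← key w' x hx, h]

theorem badProb_nonneg {k : ℕ} {V : Type*} (D : WDFA k V) (v : V) (L : ℕ) (ε : ℝ) :
    0 ≤ badProb D v L ε := by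
  unfold badProb; positivity

theorem badProb_le_sum (k M L : ℕ) (hM : 0 < M) (hML : M * L ≤ k)
    {V : Type*} [Fintype V] (D : WDFA k V) (ε : ℝ) (v : V) :
    badProb D v (M * L) ε ≤ ∑ _j : Fin M, ∑ u : V, badProb D u L ε := by
  classical
  let A : V → Set (Fin L → Fin k) := fun u => {w | Function.Injective w ∧
      ∃ m : ℕ, D.wordCost u (listOf w) = (m : ℕ∞) ∧ (m : ℝ) < (1/2 - ε) * k * L}
  let B : Fin M × V → Set (Fin (M * L) → Fin k) := fun p =>
    {w | Function.Injective w ∧ w ∘ blockEmb M L p.1 p.1.2 ∈ A p.2}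
  let W : Set (Fin (M * L) → Fin k) := {w | Function.Injective w ∧
      ∃ m : ℕ, D.wordCost v (listOf w) = (m : ℕ∞) ∧ (m : ℝ) < (1/2 - ε) * k * (M * L : ℕ)}
  have hW : W ⊆ ⋃ p ∈ (Finset.univ : Finset (Fin M × V)), B p := by
    rintro w ⟨hw, m, hm, hlt⟩
    obtain ⟨j, hj, u, m', h, h'⟩ := exists_bad_block D L ((1/2 - ε) * k * L) M (listOf w) v m hm
      (by push_cast at hlt; linarith)
    simp only [Set.mem_iUnion]
    refine ⟨(⟨j, hj⟩, u), Finset.mem_univ _, hw, hw.comp (blockEmb M L j hj).injective, m', ?_, h'⟩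
    rw [← h, listOf_block hj]
  have hcard : Nat.card W ≤ ∑ p : Fin M × V,
      Nat.card (A p.2) * (k - L).descFactorial (M * L - L) := by
    calc Nat.card W = W.ncard := rfl
      _ ≤ (⋃ p ∈ (Finset.univ : Finset (Fin M × V)), B p).ncard :=
        Set.ncard_le_ncard hW (Set.toFinite _)
      _ ≤ ∑ p : Fin M × V, (B p).ncard := Finset.set_ncard_biUnion_le _ _
      _ ≤ _ := Finset.sum_le_sum fun p _ =>
        card_restrict_le (blockEmb M L p.1 p.1.2) (A p.2) (fun g hg => hg.1)
  have hLM : L ≤ M * L := Nat.le_mul_of_pos_left L hM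
  have hfac : (k - M * L).factorial * (k - L).descFactorial (M * L - L) = (k - L).factorial := by
    have := Nat.factorial_mul_descFactorial (n := k - L) (k := M * L - L) (by omega)
    rwa [show k - L - (M * L - L) = k - M * L by omega] at this
  have hcard' : Nat.card W * (k - M * L).factorial ≤ 
      ∑ p : Fin M × V, Nat.card (A p.2) * (k - L).factorial := by
    refine (Nat.mul_le_mul_right _ hcard).trans (le_of_eq ?_)
    rw [Finset.sum_mul]
    refine Finset.sum_congr rfl fun p _ => ?_
    rw [← hfac]; ring
  have hR : ∑ _j : Fin M, ∑ u : V, badProb D u L ε =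
      ((∑ p : Fin M × V, Nat.card (A p.2) * (k - L).factorial : ℕ) : ℝ) / k.factorial := by
    push_cast
    rw [Finset.sum_div, Fintype.sum_prod_type]
    rfl
  rw [hR]
  change (Nat.card W : ℝ) * ((k - M * L).factorial : ℝ) / (k.factorial : ℝ) ≤ _
  gcongr
  exact_mod_cast hcard'

/-- For a `k`-DFA `D` and positive integers `M, L` with `ML ≤ k`:
`P(ML, ε) ≤ M·|V|·P(L, ε)`, where `P(L', ε) = max_v P(v, L', ε)`. -/
theorem badProb_mul_le (k M L : ℕ) (hM : 0 < M) (hL : 0 < L) (hML : M * L ≤ k)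
    {V : Type*} [Fintype V] [Nonempty V] (D : WDFA k V) (hD : D.IsKDFA)
    (ε : ℝ) (hε : 0 < ε) :
    (⨆ v : V, badProb D v (M * L) ε) ≤
      (M : ℝ) * (Fintype.card V) * ⨆ v : V, badProb D v L ε := by
  refine ciSup_le fun v => (badProb_le_sum k M L hM hML D ε v).trans ?_
  calc ∑ _j : Fin M, ∑ u : V, badProb D u L ε
      ≤ ∑ _j : Fin M, ∑ _u : V, ⨆ v : V, badProb D v L ε :=
        Finset.sum_le_sum fun _ _ => Finset.sum_le_sum fun u _ =>
          le_ciSup (f := fun v => badProb D v L ε) (Set.finite_range _).bddAbove u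
    _ = _ := by simp [mul_assoc]
end
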